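/- For every integer n > 1, there exists a DWA over {a, b, i} with at most 3n + 2 states, all of whose weights belong to {−1, 0, 1}, that realizes O_n. -/

import Mathlib

/-- A deterministic weighted automaton (DWA) over alphabet `A` with state space `Q`. -/
structure DWA (A : Type) (Q : Type) where
  init : Q
  δ : Q → A → Q
  c : Q → A → ℤ

/-- The extended transition function `δ̂`. -/
def DWA.run {A Q : Type} (M : DWA A Q) (q : Q) (w : List A) : Q :=
  w.foldl M.δ q

/-- The accumulated weight of the run on `w` starting in state `q`. -/
def DWA.valFrom {A Q : Type} (M : DWA A Q) : Q → List A → ℤ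
  | _, [] => 0
  | q, x :: w => M.c q x + M.valFrom (M.δ q x) w

/-- The value `A(w)` of a word: the sum of the weights along the run from the initial state. -/
def DWA.val {A Q : Type} (M : DWA A Q) (w : List A) : ℤ :=
  M.valFrom M.init w

/-- The three-letter alphabet `{a, b, i}`. -/
inductive ABI where
  | a : ABI
  | b : ABI
  | i : ABI
deriving DecidableEq

open Classical in
/-- The observation function `O_n` on nonempty words over `{a, b, i}`:
`O_n(w) = 1` if `w` consists only of `i`'s, or `i^{n+1}` is a prefix of `w`, or
`i^k·a·b^{n-k}` or `i^k·b·a^{n-k}` is a prefix of `w` for some `k < n`; otherwise `O_n(w) = 2`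
if the first letter of `w` different from `i` is `a`, and `O_n(w) = 0` if it is `b`. -/
noncomputable def Obs (n : ℕ) (w : List ABI) : ℕ :=
  if (∀ x ∈ w, x = ABI.i) ∨
      (List.replicate (n + 1) ABI.i <+: w) ∨
      (∃ k < n, List.replicate k ABI.i ++ [ABI.a] ++ List.replicate (n - k) ABI.b <+: w) ∨
      (∃ k < n, List.replicate k ABI.i ++ [ABI.b] ++ List.replicate (n - k) ABI.a <+: w)
  then 1
  else if ∃ k, List.replicate k ABI.i ++ [ABI.a] <+: w then 2
  else 0

/-- A DWA `M` over `{a, b, i}` realizes `O_n` if, for every nonempty word `w`,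
`M(w) < 0 ↔ O_n(w) = 0`, `M(w) = 0 ↔ O_n(w) = 1`, and `M(w) > 0 ↔ O_n(w) = 2`. -/
def Realizes {Q : Type} (n : ℕ) (M : DWA ABI Q) : Prop :=
  ∀ w : List ABI, w ≠ [] →
    (M.val w < 0 ↔ Obs n w = 0) ∧ (M.val w = 0 ↔ Obs n w = 1) ∧ (0 < M.val w ↔ Obs n w = 2)

/-- Transition function, states coded by naturals: `k ≤ n` counts the leading `i`s, `n+1` is the
sink, `n+1+j` waits for `j` more `b`s, `2n+1+j` waits for `j` more `a`s (`1 ≤ j ≤ n`). -/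
def stepN (n q : ℕ) : ABI → ℕ
  | .i => if q ≤ n then q + 1 else n + 1
  | .a => if q < n then n + 1 + (n - q) else if 2 * n + 2 < q then q - 1 else n + 1
  | .b => if q < n then 2 * n + 1 + (n - q)
      else if n + 2 < q ∧ q ≤ 2 * n + 1 then q - 1 else n + 1

/-- Weight function. -/
def wtN (n q : ℕ) : ABI → ℤ
  | .i => 0
  | .a => if q ≤ n then 1 else if q = 2 * n + 2 then 1 else 0
  | .b => if q ≤ n then -1 else if q = n + 2 then -1 else 0

/-- The automaton on naturals. -/
def MN (n : ℕ) : DWA ABI ℕ := ⟨0, stepN n, wtN n⟩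

theorem stepN_lt (n q : ℕ) (hq : q < 3 * n + 2) (x : ABI) : stepN n q x < 3 * n + 2 := by
  cases x <;> simp only [stepN] <;> split_ifs <;> omega

/-- The automaton on `Fin (3n+2)`. -/
def MF (n : ℕ) : DWA ABI (Fin (3 * n + 2)) :=
  ⟨⟨0, by omega⟩, fun q x => ⟨stepN n q.1 x, stepN_lt n q.1 q.2 x⟩, fun q x => wtN n q.1 x⟩

theorem MF_valFrom (n : ℕ) (w : List ABI) : ∀ q, (MF n).valFrom q w = (MN n).valFrom q.1 w := by
  induction w with
  | nil => intro q; rfl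
  | cons x w ih => intro q; simp only [DWA.valFrom, ih]; rfl

theorem val_sink (n : ℕ) (hn : 1 < n) (w : List ABI) : (MN n).valFrom (n + 1) w = 0 := by
  induction w with
  | nil => rfl
  | cons x w ih =>
    have h1 : (MN n).δ (n + 1) x = n + 1 := by
      cases x <;> simp only [MN, stepN] <;> split_ifs <;> omega
    have h2 : (MN n).c (n + 1) x = 0 := by
      cases x <;> simp only [MN, wtN] <;> split_ifs <;> omega
    simp only [DWA.valFrom, h1, h2, ih]; rfl

theorem val_A (n : ℕ) (hn : 1 < n) (w : List ABI) : ∀ j, 1 ≤ j → j ≤ n →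
    (MN n).valFrom (n + 1 + j) w = if List.replicate j ABI.b <+: w then -1 else 0 := by
  induction w with
  | nil =>
    intro j h1 h2
    obtain ⟨j, rfl⟩ := Nat.exists_eq_add_of_le' h1
    simp [DWA.valFrom, List.replicate_succ]
  | cons x w ih =>
    intro j h1 h2
    by_cases hx : x = ABI.b
    · subst hx
      by_cases hj : j = 1
      · subst hj
        have e1 : (MN n).δ (n + 1 + 1) ABI.b = n + 1 := by
          simp only [MN, stepN]; split_ifs <;> omega
        have e2 : (MN n).c (n + 1 + 1) ABI.b = -1 := by
          simp only [MN, wtN]; split_ifs <;> omega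
        simp [DWA.valFrom, e1, e2, val_sink n hn]
      · obtain ⟨j, rfl⟩ := Nat.exists_eq_add_of_le' h1
        have e1 : (MN n).δ (n + 1 + (j + 1)) ABI.b = n + 1 + j := by
          simp only [MN, stepN]; split_ifs <;> omega
        have e2 : (MN n).c (n + 1 + (j + 1)) ABI.b = 0 := by
          simp only [MN, wtN]; split_ifs <;> omega
        simp [DWA.valFrom, e1, e2, ih j (by omega) (by omega), List.replicate_succ]
    · have e1 : (MN n).δ (n + 1 + j) x = n + 1 := by
        cases x <;> simp only [MN, stepN] <;> split_ifs <;> first | omega | simp at hx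
      have e2 : (MN n).c (n + 1 + j) x = 0 := by
        cases x <;> simp only [MN, wtN] <;> split_ifs <;> first | omega | simp at hx
      obtain ⟨j, rfl⟩ := Nat.exists_eq_add_of_le' h1
      have hx' : ¬ ABI.b = x := fun h => hx h.symm
      simp [DWA.valFrom, e1, e2, val_sink n hn, List.replicate_succ, hx']

theorem val_B (n : ℕ) (hn : 1 < n) (w : List ABI) : ∀ j, 1 ≤ j → j ≤ n →
    (MN n).valFrom (2 * n + 1 + j) w = if List.replicate j ABI.a <+: w then 1 else 0 := by
  induction w with
  | nil =>
    intro j h1 h2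
    obtain ⟨j, rfl⟩ := Nat.exists_eq_add_of_le' h1
    simp [DWA.valFrom, List.replicate_succ]
  | cons x w ih =>
    intro j h1 h2
    by_cases hx : x = ABI.a
    · subst hx
      by_cases hj : j = 1
      · subst hj
        have e1 : (MN n).δ (2 * n + 1 + 1) ABI.a = n + 1 := by
          simp only [MN, stepN]; split_ifs <;> omega
        have e2 : (MN n).c (2 * n + 1 + 1) ABI.a = 1 := by
          simp only [MN, wtN]; split_ifs <;> omega
        simp [DWA.valFrom, e1, e2, val_sink n hn]
      · obtain ⟨j, rfl⟩ := Nat.exists_eq_add_of_le' h1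
        have e1 : (MN n).δ (2 * n + 1 + (j + 1)) ABI.a = 2 * n + 1 + j := by
          simp only [MN, stepN]; split_ifs <;> omega
        have e2 : (MN n).c (2 * n + 1 + (j + 1)) ABI.a = 0 := by
          simp only [MN, wtN]; split_ifs <;> omega
        simp [DWA.valFrom, e1, e2, ih j (by omega) (by omega), List.replicate_succ]
    · have e1 : (MN n).δ (2 * n + 1 + j) x = n + 1 := by
        cases x <;> simp only [MN, stepN] <;> split_ifs <;> first | omega | simp at hx
      have e2 : (MN n).c (2 * n + 1 + j) x = 0 := by
        cases x <;> simp only [MN, wtN] <;> split_ifs <;> first | omega | simp at hx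
      obtain ⟨j, rfl⟩ := Nat.exists_eq_add_of_le' h1
      have hx' : ¬ ABI.a = x := fun h => hx h.symm
      simp [DWA.valFrom, e1, e2, val_sink n hn, List.replicate_succ, hx']

/-- Reading leading `i`s. -/
theorem val_I (n : ℕ) (hn : 1 < n) (k : ℕ) : ∀ q w, q ≤ n →
    (MN n).valFrom q (List.replicate k ABI.i ++ w) =
      if q + k ≤ n then (MN n).valFrom (q + k) w else 0 := by
  induction k with
  | zero => intro q w hq; simp [hq]
  | succ k ih =>
    intro q w hq
    have e1 : (MN n).δ q ABI.i = q + 1 := by simp [MN, stepN, hq]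
    have e2 : (MN n).c q ABI.i = 0 := rfl
    simp only [List.replicate_succ, List.cons_append, DWA.valFrom, e1, e2, zero_add]
    by_cases h : q + 1 ≤ n
    · rw [ih _ _ h]; simp only [show q + 1 + k = q + (k + 1) by omega]
    · rw [show q = n by omega, val_sink n hn, if_neg (by omega)]

theorem decomp (w : List ABI) : (∃ k, w = List.replicate k ABI.i) ∨
    (∃ k t, w = List.replicate k ABI.i ++ ABI.a :: t) ∨
    (∃ k t, w = List.replicate k ABI.i ++ ABI.b :: t) := by
  induction w with
  | nil => exact Or.inl ⟨0, rfl⟩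
  | cons x w ih =>
    cases x with
    | a => exact Or.inr (Or.inl ⟨0, w, rfl⟩)
    | b => exact Or.inr (Or.inr ⟨0, w, rfl⟩)
    | i =>
      rcases ih with ⟨k, rfl⟩ | ⟨k, t, rfl⟩ | ⟨k, t, rfl⟩
      · exact Or.inl ⟨k + 1, rfl⟩
      · exact Or.inr (Or.inl ⟨k + 1, t, rfl⟩)
      · exact Or.inr (Or.inr ⟨k + 1, t, rfl⟩)

theorem prefix_iff (x y : ABI) (hx : x ≠ ABI.i) (hy : y ≠ ABI.i) (u t : List ABI) : ∀ k' k,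
    (List.replicate k' ABI.i ++ x :: u <+: List.replicate k ABI.i ++ y :: t) ↔
      k' = k ∧ x = y ∧ u <+: t := by
  intro k'
  induction k' with
  | zero =>
    intro k
    cases k with
    | zero => simp
    | succ k => simp [List.replicate_succ, hx]
  | succ k' ih =>
    intro k
    cases k with
    | zero => simp [List.replicate_succ, hy.symm]
    | succ k => simp [List.replicate_succ, ih]

theorem prefix_i_iff (y : ABI) (hy : y ≠ ABI.i) (t : List ABI) : ∀ m k,
    (List.replicate m ABI.i <+: List.replicate k ABI.i ++ y :: t) ↔ m ≤ k := by
  intro m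
  induction m with
  | zero => intro k; simp
  | succ m ih =>
    intro k
    cases k with
    | zero => simp [List.replicate_succ, hy.symm]
    | succ k => simp [List.replicate_succ, ih]

theorem MN_realizes (n : ℕ) (hn : 1 < n) : Realizes n (MN n) := by
  intro w _
  have key : ((MN n).val w = 0 ∧ Obs n w = 1) ∨ ((MN n).val w = 1 ∧ Obs n w = 2) ∨
      ((MN n).val w = -1 ∧ Obs n w = 0) := by
    have hab : ABI.a ≠ ABI.i := by decide
    have hbb : ABI.b ≠ ABI.i := by decide
    have h0 : (MN n).init = 0 := rfl
    rcases decomp w with ⟨k, rfl⟩ | ⟨k, t, rfl⟩ | ⟨k, t, rfl⟩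
    · left
      constructor
      · have := val_I n hn k 0 [] (by omega)
        rw [List.append_nil] at this
        rw [DWA.val, h0, this]; simp [DWA.valFrom]
      · rw [Obs, if_pos]
        left; intro x hx; exact List.eq_of_mem_replicate hx
    · have hv := val_I n hn k 0 (ABI.a :: t) (by omega)
      rw [zero_add] at hv
      rw [DWA.val, h0, hv]
      simp only [Obs, List.append_assoc, List.singleton_append, prefix_iff _ _ hab hab,
        prefix_iff _ _ hbb hab, prefix_i_iff _ hab]
      rcases lt_trichotomy k n with h | h | h
      · have e1 : (MN n).δ k ABI.a = n + 1 + (n - k) := by simp [MN, stepN, h]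
        have e2 : (MN n).c k ABI.a = 1 := by simp [MN, wtN, h.le]
        rw [if_pos h.le, DWA.valFrom, e1, e2, val_A n hn t _ (by omega) (by omega)]
        by_cases hp : List.replicate (n - k) ABI.b <+: t
        · left
          simp [hp, h]
        · right; left
          refine ⟨by simp [hp], ?_⟩
          rw [if_neg, if_pos]
          · exact ⟨k, (prefix_iff _ _ hab hab _ _ _ _).2 ⟨rfl, rfl, List.nil_prefix⟩⟩
          · rintro (h1 | h1 | ⟨k', h4, h5, _, h2⟩ | ⟨k', _, _, h3, _⟩)
            · exact hab (h1 _ (by simp))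
            · omega
            · subst h5; exact hp h2
            · cases h3
      · subst h
        have e1 : (MN k).δ k ABI.a = k + 1 := by
          simp only [MN, stepN]; split_ifs <;> omega
        have e2 : (MN k).c k ABI.a = 1 := by simp [MN, wtN]
        right; left
        rw [if_pos le_rfl, DWA.valFrom, e1, e2, val_sink k hn]
        refine ⟨by simp, ?_⟩
        rw [if_neg, if_pos]
        · exact ⟨k, (prefix_iff _ _ hab hab _ _ _ _).2 ⟨rfl, rfl, List.nil_prefix⟩⟩
        · rintro (h1 | h1 | ⟨k', h4, h5, _, h2⟩ | ⟨k', _, _, h3, _⟩)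
          · exact hab (h1 _ (by simp))
          · omega
          · omega
          · cases h3
      · left
        simp [h, Nat.succ_le_of_lt h]
    · have hv := val_I n hn k 0 (ABI.b :: t) (by omega)
      rw [zero_add] at hv
      rw [DWA.val, h0, hv]
      simp only [Obs, List.append_assoc, List.singleton_append, prefix_iff _ _ hab hbb,
        prefix_iff _ _ hbb hbb, prefix_i_iff _ hbb]
      rcases lt_trichotomy k n with h | h | h
      · have e1 : (MN n).δ k ABI.b = 2 * n + 1 + (n - k) := by simp [MN, stepN, h]
        have e2 : (MN n).c k ABI.b = -1 := by simp [MN, wtN, h.le]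
        rw [if_pos h.le, DWA.valFrom, e1, e2, val_B n hn t _ (by omega) (by omega)]
        by_cases hp : List.replicate (n - k) ABI.a <+: t
        · left
          simp [hp, h]
        · right; right
          refine ⟨by simp [hp], ?_⟩
          rw [if_neg, if_neg]
          · rintro ⟨k', h1⟩
            have h2 := ((prefix_iff _ _ hab hbb _ _ _ _).1 h1).2.1
            cases h2
          · rintro (h1 | h1 | ⟨k', _, _, h3, _⟩ | ⟨k', h4, h5, _, h2⟩)
            · exact hbb (h1 _ (by simp))
            · omega
            · cases h3
            · subst h5; exact hp h2
      · subst h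
        have e1 : (MN k).δ k ABI.b = k + 1 := by
          simp only [MN, stepN]; split_ifs <;> omega
        have e2 : (MN k).c k ABI.b = -1 := by simp [MN, wtN]
        right; right
        rw [if_pos le_rfl, DWA.valFrom, e1, e2, val_sink k hn]
        refine ⟨by simp, ?_⟩
        rw [if_neg, if_neg]
        · rintro ⟨k', h1⟩
          have h2 := ((prefix_iff _ _ hab hbb _ _ _ _).1 h1).2.1
          cases h2
        · rintro (h1 | h1 | ⟨k', _, _, h3, _⟩ | ⟨k', h4, h5, _, h2⟩)
          · exact hbb (h1 _ (by simp))
          · omega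
          · cases h3
          · omega
      · left
        simp [h, Nat.succ_le_of_lt h]
  omega

/-- for every `n > 1` there is a DWA over `{a, b, i}` with at most `3n + 2`
states, all of whose weights belong to `{-1, 0, 1}`, realizing `O_n`. -/
theorem exists_small_weight_dwa_realizing (n : ℕ) (hn : 1 < n) :
    ∃ (m : ℕ) (M : DWA ABI (Fin m)),
      m ≤ 3 * n + 2 ∧
      (∀ q x, M.c q x = -1 ∨ M.c q x = 0 ∨ M.c q x = 1) ∧
      Realizes n M := by
  refine ⟨3 * n + 2, MF n, le_rfl, ?_, ?_⟩
  · intro q x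
    cases x <;> simp only [MF, wtN] <;> (try split_ifs) <;> simp
  · intro w hw
    have h : (MF n).val w = (MN n).val w := MF_valFrom n w _
    rw [h]
    exact MN_realizes n hn w hw
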